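/- arXiv:2302.01774 — 2 statements merged into one kernel-verified Lean document; each statement's English description precedes it below -/
import Mathlib

section
/- Let θ be a cylindric diagram in C_ω and let x, y ∈ θ. (1) If con(x) − con(y) ∈ {0, 1, −1} in ℤ/κℤ, then x and y are comparable (x ≤ y or y ≤ x). (2) If y covers x in θ, i.e. x < y and the interval [x,y] = {z ∈ θ : x ≤ z ≤ y} equals {x, y}, then con(x) − con(y) = 1 or −1 in ℤ/κℤ. -/
/-!
Both parts are computations with lifts to `ℤ²`.

For (1), translating a lift of `y` by a multiple of `ω` makes the integer contents of the lifts
differ by exactly `c ∈ {0, 1, -1}`. The lifts then differ by `(d, d + c)`, whose coordinates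
cannot have strictly opposite signs, so the lifts are comparable (`cle_or_cle_of_content`).

For (2), take lifts `a ≤ b` of `x < y`. Some unit vector can be subtracted from `a` while staying
below `b`; since `m, ℓ ≥ 1`, no unit vector is a multiple of `ω`, so the resulting cell differs
from `x`, and by the covering hypothesis it equals `y`. A unit step changes the content by `±1`.
-/

namespace CylPaper

/-! ## The cylinder and its order -/

abbrev Z2 : Type := ℤ × ℤ

/-- The partial order on ℤ²: (a,b) ≤ (c,d) iff a ≥ c and b ≥ d. -/
def le2 (x y : Z2) : Prop := y.1 ≤ x.1 ∧ y.2 ≤ x.2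

/-- The period ω = (m, -ℓ). -/
def om (m l : ℕ) : Z2 := ((m : ℤ), -(l : ℤ))

/-- The cylinder C_ω = ℤ²/ℤω. -/
abbrev Cyl (m l : ℕ) : Type := Z2 ⧸ AddSubgroup.zmultiples (om m l)

/-- The natural projection π : ℤ² → C_ω. -/
def pr (m l : ℕ) : Z2 →+ Cyl m l := QuotientAddGroup.mk' _

/-- The induced order relation on the cylinder: x ≤ y iff there are lifts with x̃ ≤ ỹ. -/
def cle (m l : ℕ) (x y : Cyl m l) : Prop :=
  ∃ a b : Z2, pr m l a = x ∧ pr m l b = y ∧ le2 a b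

/-- A cylindric diagram: a non-trivial order filter of C_ω. -/
def IsCylindric (m l : ℕ) (θ : Set (Cyl m l)) : Prop :=
  θ.Nonempty ∧ θ ≠ Set.univ ∧ ∀ x ∈ θ, ∀ y, cle m l x y → y ∈ θ

/-- A periodic diagram of period ω: a non-trivial order filter of ℤ² with Θ + ω = Θ. -/
def IsPeriodic (m l : ℕ) (Θ : Set Z2) : Prop :=
  Θ.Nonempty ∧ Θ ≠ Set.univ ∧ (∀ x ∈ Θ, ∀ y, le2 x y → y ∈ Θ) ∧
    (fun p => p + om m l) '' Θ = Θ

/-- A proper order ideal ξ of the sub-poset θ of C_ω. -/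
def IsProperIdealOf (m l : ℕ) (θ ξ : Set (Cyl m l)) : Prop :=
  ξ ⊆ θ ∧ ξ ≠ θ ∧ ∀ x ∈ ξ, ∀ y ∈ θ, cle m l y x → y ∈ ξ

/-- A proper order ideal of the whole cylinder C_ω. -/
def IsProperIdealC (m l : ℕ) (J : Set (Cyl m l)) : Prop :=
  J ≠ Set.univ ∧ ∀ x ∈ J, ∀ y, cle m l y x → y ∈ J

/-- A proper order filter of the whole cylinder C_ω. -/
def IsProperFilterC (m l : ℕ) (J : Set (Cyl m l)) : Prop :=
  J ≠ Set.univ ∧ ∀ x ∈ J, ∀ y, cle m l x y → y ∈ J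

/-! ## The content map -/

/-- The content on ℤ²: (a,b) ↦ b - a mod κ (κ = m + ℓ). -/
def conHom (m l : ℕ) : Z2 →+ ZMod (m + l) where
  toFun p := ((p.2 - p.1 : ℤ) : ZMod (m + l))
  map_zero' := by simp
  map_add' a b := by
    simp only [Prod.fst_add, Prod.snd_add]
    push_cast
    ring

lemma conHom_om (m l : ℕ) : conHom m l (om m l) = 0 := by
  have h : ((m + l : ℕ) : ZMod (m + l)) = 0 := ZMod.natCast_self _
  show ((((om m l).2 - (om m l).1 : ℤ)) : ZMod (m + l)) = 0
  simp only [om]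
  push_cast at h ⊢
  linear_combination -h

/-- The content map con : C_ω → ℤ/κℤ. -/
def con (m l : ℕ) : Cyl m l →+ ZMod (m + l) :=
  QuotientAddGroup.lift _ (conHom m l) (by
    intro x hx
    obtain ⟨k, rfl⟩ := AddSubgroup.mem_zmultiples_iff.mp hx
    simp only [AddMonoidHom.mem_ker, map_zsmul, conHom_om, smul_zero])

/-! ## The affine root system of type A_{κ-1}^{(1)} -/

/-- h*, with coordinates in the basis {α_i (i ∈ ℤ/κℤ), Λ₀}:
`(c, t)` stands for `Σ_i c_i α_i + t Λ₀`. -/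
abbrev Hw (κ : ℕ) : Type := (ZMod κ → ℚ) × ℚ

/-- The affine Cartan matrix of type A_{κ-1}^{(1)} (valid for κ ≥ 2). -/
def cartan (κ : ℕ) (i j : ZMod κ) : ℚ :=
  (if i = j then 2 else 0) + (if i - j = 1 then -1 else 0) + (if i - j = -1 then -1 else 0)

/-- The simple root α_i. -/
def alphaR (κ : ℕ) (i : ZMod κ) : Hw κ := (Pi.single i 1, 0)

/-- The null root δ = Σ_i α_i. -/
def deltaR (κ : ℕ) : Hw κ := (fun _ => 1, 0)

/-- The pairing ⟨ζ, α_i^∨⟩. -/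
noncomputable def pairSimple (κ : ℕ) (ζ : Hw κ) (i : ZMod κ) : ℚ :=
  (∑ᶠ j, ζ.1 j * cartan κ i j) + ζ.2 * (if i = 0 then 1 else 0)

/-- The pairing ⟨ζ, β^∨⟩ where β = Σ_i k_i α_i lies in the root lattice,
so β^∨ = Σ_i k_i α_i^∨. -/
noncomputable def pairCo (κ : ℕ) (ζ β : Hw κ) : ℚ := ∑ᶠ i, β.1 i * pairSimple κ ζ i

/-- The simple reflection s_i : ζ ↦ ζ - ⟨ζ, α_i^∨⟩ α_i, as a map on h*. -/
noncomputable def sFun (κ : ℕ) (i : ZMod κ) (ζ : Hw κ) : Hw κ :=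
  ζ - pairSimple κ ζ i • alphaR κ i

/-- The element s_{i₁} s_{i₂} ⋯ s_{i_r} of the affine Weyl group
given by a word [i₁, i₂, …, i_r]. -/
noncomputable def wordProd (κ : ℕ) (L : List (ZMod κ)) : Hw κ → Hw κ :=
  (L.map (sFun κ)).foldr (· ∘ ·) id

/-- Membership in the affine Weyl group W (generated by the s_i). -/
def Wmem (κ : ℕ) (w : Hw κ → Hw κ) : Prop := ∃ L : List (ZMod κ), wordProd κ L = w

/-- The Coxeter length: the least r such that w is a product of r simple reflections. -/
noncomputable def len (κ : ℕ) (w : Hw κ → Hw κ) : ℕ :=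
  sInf {r : ℕ | ∃ L : List (ZMod κ), L.length = r ∧ wordProd κ L = w}

/-- Q₊ = Σ_i ℤ≥0 α_i. -/
def QPos (κ : ℕ) : Set (Hw κ) := {x | x.2 = 0 ∧ ∀ i, ∃ n : ℕ, x.1 i = (n : ℚ)}

/-- The set R = WΠ of real roots. -/
def Rset (κ : ℕ) : Set (Hw κ) :=
  {β | ∃ (L : List (ZMod κ)) (i : ZMod κ), β = wordProd κ L (alphaR κ i)}

/-- Positive real roots R₊ = R ∩ Q₊. -/
def Rpos (κ : ℕ) : Set (Hw κ) := Rset κ ∩ QPos κ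

/-- Negative real roots R₋ = -R₊. -/
def Rneg (κ : ℕ) : Set (Hw κ) := {β | -β ∈ Rpos κ}

/-- The inversion set R(w) = R₊ ∩ w R₋. -/
def invSet (κ : ℕ) (w : Hw κ → Hw κ) : Set (Hw κ) := Rpos κ ∩ (w '' Rneg κ)

/-- The weak right Bruhat order on W. -/
def wble (κ : ℕ) (v w : Hw κ → Hw κ) : Prop :=
  Relation.ReflTransGen
    (fun u u' => ∃ i : ZMod κ, u' = u ∘ sFun κ i ∧ len κ u' = len κ u + 1) v w

/-- The weak Bruhat interval [e, w]. -/
def bint (κ : ℕ) (w : Hw κ → Hw κ) : Set (Hw κ → Hw κ) :=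
  {x | wble κ id x ∧ wble κ x w}

/-- A single commutation move on words: swap adjacent letters i, j with i - j ≠ 0, ±1. -/
def CommMove (κ : ℕ) (L1 L2 : List (ZMod κ)) : Prop :=
  ∃ (u v : List (ZMod κ)) (i j : ZMod κ),
    i - j ≠ 0 ∧ i - j ≠ 1 ∧ i - j ≠ -1 ∧
    L1 = u ++ i :: j :: v ∧ L2 = u ++ j :: i :: v

/-- A word is reduced if its length equals the Coxeter length of its product. -/
def IsReducedWord (κ : ℕ) (L : List (ZMod κ)) : Prop :=
  len κ (wordProd κ L) = L.length

/-- Fully commutative: any reduced word for w can be obtained from any other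
using only commutation moves. -/
def FullyComm (κ : ℕ) (w : Hw κ → Hw κ) : Prop :=
  ∀ L1 L2 : List (ZMod κ),
    IsReducedWord κ L1 → wordProd κ L1 = w →
    IsReducedWord κ L2 → wordProd κ L2 = w →
    Relation.ReflTransGen (CommMove κ) L1 L2

/-! ## Hooks, bottom set and weights attached to a cylindric diagram -/

/-- α(x) = α_{con(x)}. -/
def alC (m l : ℕ) (x : Cyl m l) : Hw (m + l) := alphaR (m + l) (con m l x)

/-- arm(x) = {x + π(0,k) : k ≥ 1} ∩ θ. -/
def armSet (m l : ℕ) (θ : Set (Cyl m l)) (x : Cyl m l) : Set (Cyl m l) :=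
  {y | y ∈ θ ∧ ∃ k : ℕ, 1 ≤ k ∧ y = x + pr m l (0, (k : ℤ))}

/-- leg(x) = {x + π(k,0) : k ≥ 1} ∩ θ. -/
def legSet (m l : ℕ) (θ : Set (Cyl m l)) (x : Cyl m l) : Set (Cyl m l) :=
  {y | y ∈ θ ∧ ∃ k : ℕ, 1 ≤ k ∧ y = x + pr m l ((k : ℤ), 0)}

/-- The colored hook length hk(x) = α(x) + Σ_{y∈arm(x)} α(y) + Σ_{y∈leg(x)} α(y). -/
noncomputable def hk (m l : ℕ) (θ : Set (Cyl m l)) (x : Cyl m l) : Hw (m + l) :=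
  alC m l x + (∑ᶠ y ∈ armSet m l θ x, alC m l y) + (∑ᶠ y ∈ legSet m l θ x, alC m l y)

/-- x is the minimum cell b_i of content i in θ. -/
def IsBottomCell (m l : ℕ) (θ : Set (Cyl m l)) (i : ZMod (m + l)) (x : Cyl m l) : Prop :=
  x ∈ θ ∧ con m l x = i ∧ ∀ y ∈ θ, con m l y = i → cle m l x y

/-- The bottom set Γ = {b_i : i ∈ ℤ/κℤ}. -/
def btm (m l : ℕ) (θ : Set (Cyl m l)) : Set (Cyl m l) :=
  {x | ∃ i, IsBottomCell m l θ i x}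

/-- The maximal elements Γ_max of the bottom set. -/
def btmMax (m l : ℕ) (θ : Set (Cyl m l)) : Set (Cyl m l) :=
  {x | x ∈ btm m l θ ∧ ∀ y ∈ btm m l θ, cle m l x y → y = x}

/-- The minimal elements Γ_min of the bottom set. -/
def btmMin (m l : ℕ) (θ : Set (Cyl m l)) : Set (Cyl m l) :=
  {x | x ∈ btm m l θ ∧ ∀ y ∈ btm m l θ, cle m l y x → y = x}

open Classical in
/-- The coefficient a_i of Λ_i in the predominant weight P_θ:
1 if b_i ∈ Γ_max, -1 if b_i ∈ Γ_min, 0 otherwise. -/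
noncomputable def aC (m l : ℕ) (θ : Set (Cyl m l)) (i : ZMod (m + l)) : ℚ :=
  if ∃ x, IsBottomCell m l θ i x ∧ x ∈ btmMax m l θ then 1
  else if ∃ x, IsBottomCell m l θ i x ∧ x ∈ btmMin m l θ then -1 else 0

/-- The pairing ⟨P_θ, β^∨⟩ = Σ_i a_i k_i for β = Σ_i k_i α_i,
where P_θ = Σ_i a_i Λ_i (since ⟨Λ_i, α_j^∨⟩ = δ_{ij} and ⟨Λ_i, d⟩ = 0). -/
noncomputable def pairP (m l : ℕ) (θ : Set (Cyl m l)) (β : Hw (m + l)) : ℚ :=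
  ∑ᶠ i, aC m l θ i * β.1 i

/-- D(P_θ) = {α ∈ R₊ : ⟨P_θ, α^∨⟩ = -1}. -/
def DSet (m l : ℕ) (θ : Set (Cyl m l)) : Set (Hw (m + l)) :=
  {β | β ∈ Rpos (m + l) ∧ pairP m l θ β = -1}

/-- The "inversion set" R(w_θ) = {hk(x) : x ∈ θ}. -/
def RwTheta (m l : ℕ) (θ : Set (Cyl m l)) : Set (Hw (m + l)) := hk m l θ '' θ

/-- The set Π_θ = Π_θ^0 ∪ Π_θ^arm ∪ Π_θ^leg. -/
def PiTheta (m l : ℕ) (θ : Set (Cyl m l)) : Set (Hw (m + l)) :=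
  {v | ∃ x, x ∈ btm m l θ ∧ x ∉ btmMax m l θ ∧ x ∉ btmMin m l θ ∧ v = alC m l x} ∪
  {v | ∃ x, x ∈ btmMax m l θ ∧ v = alC m l x + ∑ᶠ y ∈ armSet m l θ x, alC m l y} ∪
  {v | ∃ x, x ∈ btmMax m l θ ∧ v = alC m l x + ∑ᶠ y ∈ legSet m l θ x, alC m l y}

/-- The modified order ⊴ on R(w_θ): α ⊴ β iff β - α ∈ Σ_{γ∈Π_θ} ℤ≥0 γ. -/
def trile (m l : ℕ) (θ : Set (Cyl m l)) (α β : Hw (m + l)) : Prop :=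
  β - α ∈ AddSubmonoid.closure (PiTheta m l θ)

/-! ## Standard tableaux (encoded by the inverse enumeration e = T⁻¹ : ℤ≥1 → θ) -/

/-- A standard tableau on θ, given by the enumeration e = T⁻¹ : {1,2,…} → θ.
This is precisely the data of an order-preserving bijection T : θ → ℤ≥1. -/
def IsTableau (m l : ℕ) (θ : Set (Cyl m l)) (e : ℕ → Cyl m l) : Prop :=
  Set.InjOn e {a : ℕ | 1 ≤ a} ∧ e '' {a : ℕ | 1 ≤ a} = θ ∧
  ∀ a b : ℕ, 1 ≤ a → 1 ≤ b → cle m l (e a) (e b) → e a ≠ e b → a < b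

/-- A standard tableau on a finite (skew) diagram ξ with |ξ| = n, encoded by
the enumeration e = S⁻¹ : {1,…,n} → ξ. -/
def IsTableauOn (m l : ℕ) (ξ : Set (Cyl m l)) (n : ℕ) (e : ℕ → Cyl m l) : Prop :=
  Set.InjOn e (Set.Icc 1 n) ∧ e '' Set.Icc 1 n = ξ ∧
  ∀ a b : ℕ, a ∈ Set.Icc 1 n → b ∈ Set.Icc 1 n → cle m l (e a) (e b) → e a ≠ e b → a < b

/-- The word (con(e 1), con(e 2), …, con(e n)). -/
def tabWord (m l : ℕ) (e : ℕ → Cyl m l) (n : ℕ) : List (ZMod (m + l)) :=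
  (List.range n).map (fun k => con m l (e (k + 1)))

/-- The semi-infinite Bruhat interval [e, w_{θ,T}) = ⋃_{n≥1} [e, w_{θ,T}[n]]. -/
def semiInt (m l : ℕ) (e : ℕ → Cyl m l) : Set (Hw (m + l) → Hw (m + l)) :=
  ⋃ n ∈ {n : ℕ | 1 ≤ n}, bint (m + l) (wordProd (m + l) (tabWord m l e n))

/-- w is P_θ-pluscule: ⟨P_θ, α^∨⟩ = -1 for every α ∈ R(w). -/
def Pluscule (m l : ℕ) (θ : Set (Cyl m l)) (w : Hw (m + l) → Hw (m + l)) : Prop :=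
  ∀ β ∈ invSet (m + l) w, pairP m l θ β = -1

/-- The generating relation of the heap order ⪯_T on ℤ≥1. -/
def heapRel (m l : ℕ) (e : ℕ → Cyl m l) (a b : ℕ) : Prop :=
  1 ≤ a ∧ a ≤ b ∧
    (con m l (e a) = con m l (e b) ∨
      sFun (m + l) (con m l (e a)) ∘ sFun (m + l) (con m l (e b)) ≠
        sFun (m + l) (con m l (e b)) ∘ sFun (m + l) (con m l (e a)))

/-- The generating relation of the heap order ≤^hp on R(w_θ):
α ≤ β whenever β - α ∈ Q₊ (the ordinary order) and ⟨α, β^∨⟩ ≠ 0. -/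
def hpRel (m l : ℕ) (θ : Set (Cyl m l)) (α β : Hw (m + l)) : Prop :=
  α ∈ RwTheta m l θ ∧ β ∈ RwTheta m l θ ∧ β - α ∈ QPos (m + l) ∧
    pairCo (m + l) α β ≠ 0

/-- v is the Weyl group element w_ξ of a proper order ideal ξ of θ. -/
def IsIdealWord (m l : ℕ) (θ ξ : Set (Cyl m l)) (v : Hw (m + l) → Hw (m + l)) : Prop :=
  IsProperIdealOf m l θ ξ ∧
    ∃ n e, IsTableauOn m l ξ n e ∧ v = wordProd (m + l) (tabWord m l e n)

/-- A proper order ideal of the poset (R(w_θ), ⊴). -/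
def IsProperIdealOfRw (m l : ℕ) (θ : Set (Cyl m l)) (J : Set (Hw (m + l))) : Prop :=
  J ⊆ RwTheta m l θ ∧ J ≠ RwTheta m l θ ∧
    ∀ β ∈ J, ∀ α ∈ RwTheta m l θ, trile m l θ α β → α ∈ J


lemma con_pr (m l : ℕ) (p : Z2) :
    con m l (pr m l p) = ((p.2 - p.1 : ℤ) : ZMod (m + l)) := rfl

lemma pr_zsmul_om (m l : ℕ) (k : ℤ) : pr m l (k • om m l) = 0 :=
  (QuotientAddGroup.eq_zero_iff _).2 (AddSubgroup.mem_zmultiples_iff.2 ⟨k, rfl⟩)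

/-- An equality of contents in `ℤ/κℤ` lifts to an equality in `ℤ` after translation by a multiple
of `ω`; comparability then only needs `|c| ≤ 1`. -/
lemma cle_or_cle_of_content (m l : ℕ) (a b : Z2) (c : ℤ) (hc : c = 0 ∨ c = 1 ∨ c = -1)
    (h : con m l (pr m l a) - con m l (pr m l b) = (c : ZMod (m + l))) :
    cle m l (pr m l a) (pr m l b) ∨ cle m l (pr m l b) (pr m l a) := by
  have h' : (((a.2 - a.1) - (b.2 - b.1) : ℤ) : ZMod (m + l)) = (c : ZMod (m + l)) := by
    rw [← h, con_pr, con_pr]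
    push_cast
    ring
  obtain ⟨k, hk⟩ := (ZMod.intCast_eq_intCast_iff_dvd_sub _ _ _).1 h'
  have hb : pr m l (b + k • om m l) = pr m l b := by
    rw [map_add, pr_zsmul_om, add_zero]
  have h1 : (b + k • om m l).1 = b.1 + k * m := by simp [om]
  have h2 : (b + k • om m l).2 = b.2 - k * l := by simp [om, sub_eq_add_neg]
  have hk' : c - ((a.2 - a.1) - (b.2 - b.1)) = k * m + k * l := by
    rw [hk]
    push_cast
    ring
  have key : le2 a (b + k • om m l) ∨ le2 (b + k • om m l) a := by
    unfold le2
    rw [h1, h2]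
    generalize k * (m : ℤ) = u at *
    generalize k * (l : ℤ) = v at *
    omega
  rcases key with h | h
  · exact Or.inl ⟨a, _, rfl, hb, h⟩
  · exact Or.inr ⟨_, a, hb, rfl, h⟩

/-- A vector on a coordinate axis which lies in `ℤω` is zero, because both coordinates of `ω` are
nonzero. -/
lemma eq_zero_of_pr_eq_zero (m l : ℕ) (hm : 1 ≤ m) (hl : 1 ≤ l) (p : Z2)
    (hp : p.1 = 0 ∨ p.2 = 0) (h : pr m l p = 0) : p = 0 := by
  obtain ⟨k, rfl⟩ := AddSubgroup.mem_zmultiples_iff.1 ((QuotientAddGroup.eq_zero_iff _).1 h)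
  have hk : k = 0 := by
    rcases hp with hp | hp <;> simp [om] at hp <;> omega
  rw [hk, zero_smul]

/-- If `y` covers `x` in an order filter and subtracting the axis vector `e` from a lift of `x`
keeps it below a lift of `y`, then that step ends at `y`. -/
lemma pr_sub_eq_of_covers (m l : ℕ) (hm : 1 ≤ m) (hl : 1 ≤ l) (θ : Set (Cyl m l))
    (hθ : ∀ x ∈ θ, ∀ y, cle m l x y → y ∈ θ) (a b e : Z2) (ha : pr m l a ∈ θ)
    (hcov : ∀ z ∈ θ, cle m l (pr m l a) z → cle m l z (pr m l b) →
      z = pr m l a ∨ z = pr m l b)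
    (he : e.1 = 0 ∨ e.2 = 0) (he0 : e ≠ 0)
    (h1 : le2 a (a - e)) (h2 : le2 (a - e) b) : pr m l (a - e) = pr m l b := by
  have hxz : cle m l (pr m l a) (pr m l (a - e)) := ⟨_, _, rfl, rfl, h1⟩
  rcases hcov _ (hθ _ ha _ hxz) hxz ⟨_, _, rfl, rfl, h2⟩ with h | h
  · rw [map_sub, sub_eq_self] at h
    exact absurd (eq_zero_of_pr_eq_zero m l hm hl e he h) he0
  · exact h

/-- Proposition 1.10: (1) cells with contents differing by 0, ±1 are comparable;
(2) if y covers x then their contents differ by ±1. -/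
theorem statement_2 (m l : ℕ) (hm : 1 ≤ m) (hl : 1 ≤ l)
    (θ : Set (Cyl m l)) (hθ : IsCylindric m l θ)
    (x y : Cyl m l) (hx : x ∈ θ) (hy : y ∈ θ) :
    ((con m l x - con m l y = 0 ∨ con m l x - con m l y = 1 ∨
        con m l x - con m l y = -1) → (cle m l x y ∨ cle m l y x)) ∧
    ((cle m l x y ∧ x ≠ y ∧
        ∀ z ∈ θ, cle m l x z → cle m l z y → z = x ∨ z = y) →
      (con m l x - con m l y = 1 ∨ con m l x - con m l y = -1)) := by
  constructor
  · intro h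
    obtain ⟨a, rfl⟩ : ∃ a, pr m l a = x := QuotientAddGroup.mk'_surjective _ x
    obtain ⟨b, rfl⟩ : ∃ b, pr m l b = y := QuotientAddGroup.mk'_surjective _ y
    rcases h with h | h | h
    · exact cle_or_cle_of_content m l a b 0 (by simp) (by simpa using h)
    · exact cle_or_cle_of_content m l a b 1 (by simp) (by simpa using h)
    · exact cle_or_cle_of_content m l a b (-1) (by simp) (by simpa using h)
  · rintro ⟨⟨a, b, rfl, rfl, hab⟩, hne, hcov⟩
    have hab' : b.1 < a.1 ∨ b.2 < a.2 := by
      by_contra hcon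
      apply hne
      have : a = b := Prod.ext (by have := hab.1; omega) (by have := hab.2; omega)
      rw [this]
    have step := fun e => pr_sub_eq_of_covers m l hm hl θ hθ.2.2 a b e hx hcov
    obtain ⟨hab1, hab2⟩ := hab
    rcases hab' with hlt | hlt
    · right
      rw [← step (1, 0) (by simp) (by simp) (by simp [le2])
        ⟨by simp only [Prod.fst_sub]; omega, by simp only [Prod.snd_sub]; omega⟩, con_pr, con_pr]
      push_cast [Prod.fst_sub, Prod.snd_sub]
      ring
    · left
      rw [← step (0, 1) (by simp) (by simp) (by simp [le2])
        ⟨by simp only [Prod.fst_sub]; omega, by simp only [Prod.snd_sub]; omega⟩, con_pr, con_pr]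
      push_cast [Prod.fst_sub, Prod.snd_sub]
      ring

end CylPaper
end

section
/- Let θ be a cylindric diagram in C_ω with ω = (m, −ℓ). For every x ∈ θ, N(hk(x)) = max{k ∈ ℤ : x + k·π(0,ℓ) ∈ θ}, where for α ∈ Q₊ one sets N(α) = max{k ∈ ℤ : α − kδ ∈ Q₊}. -/
/-!
Let `P k` say that `x + π(0,k) ∈ θ` and `Q k` that `x + π(k,0) ∈ θ`. Since `θ` is an order
filter other than the whole cylinder, both predicates are down-closed in `k ∈ ℤ` and bounded
above, so `P k ↔ k ≤ A` and `Q k ↔ k ≤ L`, where `A` and `L` are the arm and leg lengths of `x`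
(`exists_arm`, `exists_leg`). As `π(0,ℓ) = π(m,0)`, the conditions `kℓ ≤ A` and `km ≤ L` are
equivalent, hence `n = ⌊A/ℓ⌋ = ⌊L/m⌋` is the maximal `k` with `x + k π(0,ℓ) ∈ θ`, and
`nκ + 1 ≤ A + L + 1 ≤ (n+1)κ - 1`.

Along the leg, the cell `x`, and the arm, the content runs through the consecutive integers
`c - L, …, c + A`, where `c` is the content of a lift of `x` (`hk_eq_sum`). So the coefficient of
`α_i` in `hk(x)` counts the members of an interval of `A + L + 1` consecutive integers that are
congruent to `i` modulo `κ` (`hk_coeff`). Each such count is at least `n`, and the residue of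
`c + A + 1` is hit at most `n` times, so `N(hk(x)) = n`.
-/

namespace CylPaper

/-! ### Rays in a cylindric diagram -/

lemma pr_om (m l : ℕ) : pr m l (om m l) = 0 :=
  (QuotientAddGroup.eq_zero_iff _).mpr (AddSubgroup.mem_zmultiples _)

lemma pr_eq_pr_iff (m l : ℕ) (p q : Z2) :
    pr m l p = pr m l q ↔ ∃ j : ℤ, j • om m l = q - p := by
  constructor
  · intro h
    have h' : pr m l (q - p) = 0 := by rw [map_sub, h, sub_self]
    exact AddSubgroup.mem_zmultiples_iff.mp ((QuotientAddGroup.eq_zero_iff _).mp h')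
  · rintro ⟨j, hj⟩
    have h' : pr m l (q - p) = 0 := by rw [← hj, map_zsmul, pr_om, smul_zero]
    rw [map_sub, sub_eq_zero] at h'
    exact h'.symm

lemma pr_shift (m l : ℕ) (a b j : ℤ) : pr m l (a, b) = pr m l (a + j * m, b - j * l) := by
  rw [pr_eq_pr_iff]
  refine ⟨j, ?_⟩
  ext <;> simp [om]

/-- The order filter condition on lifts: a diagram is closed under decreasing both coordinates. -/
lemma mem_of_le {m l : ℕ} {θ : Set (Cyl m l)} (hθ : IsCylindric m l θ) {a b c d : ℤ}
    (h : pr m l (a, b) ∈ θ) (hc : c ≤ a) (hd : d ≤ b) : pr m l (c, d) ∈ θ :=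
  hθ.2.2 _ h _ ⟨(a, b), (c, d), rfl, rfl, hc, hd⟩

lemma exists_pr_notMem {m l : ℕ} {θ : Set (Cyl m l)} (hθ : IsCylindric m l θ) :
    ∃ c d : ℤ, pr m l (c, d) ∉ θ := by
  obtain ⟨z, hz⟩ := (Set.ne_univ_iff_exists_notMem θ).mp hθ.2.1
  obtain ⟨⟨c, d⟩, rfl⟩ := QuotientAddGroup.mk'_surjective _ z
  exact ⟨c, d, hz⟩

lemma exists_threshold {P : ℤ → Prop} (h0 : P 0) (hdown : ∀ j k, j ≤ k → P k → P j)
    (hb : ∃ B, ∀ k, P k → k ≤ B) : ∃ A : ℤ, 0 ≤ A ∧ ∀ k, P k ↔ k ≤ A := by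
  obtain ⟨A, hA, hmax⟩ := Int.exists_greatest_of_bdd hb ⟨0, h0⟩
  exact ⟨A, hmax 0 h0, fun k => ⟨hmax k, fun h => hdown _ _ h hA⟩⟩

/-- The arm of a cell consists of its first `A` successors along `(0,1)`, for a finite arm length
`A`. -/
lemma exists_arm {m l : ℕ} (hm : 1 ≤ m) {θ : Set (Cyl m l)} (hθ : IsCylindric m l θ) {a b : ℤ}
    (hx : pr m l (a, b) ∈ θ) :
    ∃ A : ℤ, 0 ≤ A ∧ ∀ k, pr m l (a, b + k) ∈ θ ↔ k ≤ A := by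
  refine exists_threshold (by simpa using hx) (fun j k h hk => mem_of_le hθ hk le_rfl (by lia)) ?_
  obtain ⟨c, d, hcd⟩ := exists_pr_notMem hθ
  refine ⟨d - b + |c - a| * l, fun k hk => ?_⟩
  by_contra! hlt
  -- The lift moved by `|c - a| • ω` dominates `(c, d)` in both coordinates.
  rw [pr_shift m l _ _ |c - a|] at hk
  have h1 : |c - a| * 1 ≤ |c - a| * (m : ℤ) :=
    mul_le_mul_of_nonneg_left (by exact_mod_cast hm) (abs_nonneg _)
  have h2 := le_abs_self (c - a)
  exact hcd (mem_of_le hθ hk (by linarith) (by linarith))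

/-- The leg of a cell consists of its first `L` successors along `(1,0)`, for a finite leg length
`L`. -/
lemma exists_leg {m l : ℕ} (hl : 1 ≤ l) {θ : Set (Cyl m l)} (hθ : IsCylindric m l θ) {a b : ℤ}
    (hx : pr m l (a, b) ∈ θ) :
    ∃ L : ℤ, 0 ≤ L ∧ ∀ k, pr m l (a + k, b) ∈ θ ↔ k ≤ L := by
  refine exists_threshold (by simpa using hx) (fun j k h hk => mem_of_le hθ hk (by lia) le_rfl) ?_
  obtain ⟨c, d, hcd⟩ := exists_pr_notMem hθ
  refine ⟨c - a + |d - b| * m, fun k hk => ?_⟩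
  by_contra! hlt
  rw [pr_shift m l _ _ (-|d - b|)] at hk
  have h1 : |d - b| * 1 ≤ |d - b| * (l : ℤ) :=
    mul_le_mul_of_nonneg_left (by exact_mod_cast hl) (abs_nonneg _)
  have h2 := le_abs_self (d - b)
  exact hcd (mem_of_le hθ hk (by linarith) (by linarith))

/-! ### The colored hook length as a sum over an interval of contents -/

lemma alC_pr (m l : ℕ) (a b : ℤ) :
    alC m l (pr m l (a, b)) = alphaR (m + l) ((b - a : ℤ) : ZMod (m + l)) := rfl

lemma finsum_alC {m l : ℕ} {S : Set (Cyl m l)} (f : ℤ → Cyl m l) (s : Finset ℤ)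
    (hf : Function.Injective f) (hS : S = f '' s) :
    ∑ᶠ y ∈ S, alC m l y = ∑ t ∈ s, alC m l (f t) := by
  rw [hS, finsum_mem_image hf.injOn, finsum_mem_coe_finset]

lemma arm_sum {m l : ℕ} (hm : 1 ≤ m) {θ : Set (Cyl m l)} {a b A : ℤ}
    (hA : ∀ k, pr m l (a, b + k) ∈ θ ↔ k ≤ A) :
    ∑ᶠ y ∈ armSet m l θ (pr m l (a, b)), alC m l y =
      ∑ t ∈ Finset.Ioc (b - a) (b - a + A), alphaR (m + l) (t : ZMod (m + l)) := by
  -- Cells are indexed by the content `t` of their lift `(a, a + t)`.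
  rw [finsum_alC (fun t => pr m l (a, a + t)) (Finset.Ioc (b - a) (b - a + A))]
  · refine Finset.sum_congr rfl fun t _ => ?_
    rw [alC_pr, add_sub_cancel_left]
  · intro s t h
    obtain ⟨j, hj⟩ := (pr_eq_pr_iff _ _ _ _).mp h
    have h1 := congrArg Prod.fst hj
    have h2 := congrArg Prod.snd hj
    simp [om] at h1 h2
    have hj0 : j = 0 := h1.resolve_right (by lia)
    subst hj0
    lia
  · ext y
    simp only [armSet, Set.mem_ofPred_eq, ← map_add, Set.mem_image, Finset.mem_coe,
      Finset.mem_Ioc, Prod.mk_add_mk, add_zero]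
    constructor
    · rintro ⟨hy, k, hk, rfl⟩
      exact ⟨b - a + k, by have := (hA k).mp hy; lia, by congr 2; ring⟩
    · rintro ⟨t, ht, rfl⟩
      have e : a + t = b + (t - (b - a)) := by ring
      refine ⟨?_, (t - (b - a)).toNat, by lia, ?_⟩
      · rw [e, hA]; lia
      · rw [Int.toNat_of_nonneg (by lia), e]

lemma leg_sum {m l : ℕ} (hl : 1 ≤ l) {θ : Set (Cyl m l)} {a b L : ℤ}
    (hL : ∀ k, pr m l (a + k, b) ∈ θ ↔ k ≤ L) :
    ∑ᶠ y ∈ legSet m l θ (pr m l (a, b)), alC m l y =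
      ∑ t ∈ Finset.Ioc (b - a - L - 1) (b - a - 1), alphaR (m + l) (t : ZMod (m + l)) := by
  rw [finsum_alC (fun t => pr m l (b - t, b)) (Finset.Ioc (b - a - L - 1) (b - a - 1))]
  · refine Finset.sum_congr rfl fun t _ => ?_
    rw [alC_pr, sub_sub_cancel]
  · intro s t h
    obtain ⟨j, hj⟩ := (pr_eq_pr_iff _ _ _ _).mp h
    have h1 := congrArg Prod.fst hj
    have h2 := congrArg Prod.snd hj
    simp [om] at h1 h2
    have hj0 : j = 0 := h2.resolve_right (by lia)
    subst hj0
    lia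
  · ext y
    simp only [legSet, Set.mem_ofPred_eq, ← map_add, Set.mem_image, Finset.mem_coe,
      Finset.mem_Ioc, Prod.mk_add_mk, add_zero]
    constructor
    · rintro ⟨hy, k, hk, rfl⟩
      exact ⟨b - a - k, by have := (hL k).mp hy; lia, by congr 2; ring⟩
    · rintro ⟨t, ht, rfl⟩
      have e : b - t = a + (b - a - t) := by ring
      refine ⟨?_, (b - a - t).toNat, by lia, ?_⟩
      · rw [e, hL]; lia
      · rw [Int.toNat_of_nonneg (by lia), e]

lemma hk_eq_sum {m l : ℕ} (hm : 1 ≤ m) (hl : 1 ≤ l) {θ : Set (Cyl m l)} {a b A L : ℤ}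
    (hA0 : 0 ≤ A) (hL0 : 0 ≤ L)
    (hA : ∀ k, pr m l (a, b + k) ∈ θ ↔ k ≤ A) (hL : ∀ k, pr m l (a + k, b) ∈ θ ↔ k ≤ L) :
    hk m l θ (pr m l (a, b)) =
      ∑ t ∈ Finset.Ioc (b - a - L - 1) (b - a + A), alphaR (m + l) (t : ZMod (m + l)) := by
  have hs : Finset.Ioc (b - a - L - 1) (b - a + A) =
      insert (b - a)
        (Finset.Ioc (b - a) (b - a + A) ∪ Finset.Ioc (b - a - L - 1) (b - a - 1)) := by
    ext t
    simp only [Finset.mem_Ioc, Finset.mem_insert, Finset.mem_union]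
    lia
  rw [hk, arm_sum hm hA, leg_sum hl hL, alC_pr, hs, Finset.sum_insert, Finset.sum_union, add_assoc]
  · rw [Finset.disjoint_left]
    intro t
    simp only [Finset.mem_Ioc]
    lia
  · simp only [Finset.mem_Ioc, Finset.mem_union]
    lia

/-- The coefficient of `α_v` in a sum of simple roots over an interval of contents. -/
lemma hk_coeff {κ : ℕ} (hκ : 0 < κ) (p q v : ℤ) :
    (∑ t ∈ Finset.Ioc p q, alphaR κ (t : ZMod κ)).1 (v : ZMod κ) =
      ((max ((q - v) / κ - (p - v) / κ) 0 : ℤ) : ℚ) := by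
  have h := Int.Ioc_filter_modEq_card p q (r := (κ : ℤ)) (by exact_mod_cast hκ) v
  have e : ∀ w : ℤ, ⌊((w : ℚ) - v) / ((κ : ℤ) : ℚ)⌋ = (w - v) / κ := fun w => by
    have := Rat.floor_intCast_div_natCast (w - v) κ
    push_cast at this ⊢
    exact this
  rw [e, e] at h
  rw [← h, Prod.fst_sum, Finset.sum_apply, Finset.card_filter]
  push_cast
  refine Finset.sum_congr rfl fun t _ => ?_
  simp only [alphaR, Pi.single_apply, ZMod.intCast_eq_intCast_iff]
  congr 1
  exact propext ⟨Int.ModEq.symm, Int.ModEq.symm⟩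

lemma hk_snd (κ : ℕ) (s : Finset ℤ) : (∑ t ∈ s, alphaR κ (t : ZMod κ)).2 = 0 := by
  simp [Prod.snd_sum, alphaR]

/-- Lemma 2.3: N(hk(x)) = max{k ∈ ℤ : x + k·π(0,ℓ) ∈ θ}, where
N(α) = max{k ∈ ℤ : α - kδ ∈ Q₊}. -/
theorem statement_4 (m l : ℕ) (hm : 1 ≤ m) (hl : 1 ≤ l)
    (θ : Set (Cyl m l)) (hθ : IsCylindric m l θ) (x : Cyl m l) (hx : x ∈ θ) :
    ∃ n : ℤ,
      IsGreatest {k : ℤ | hk m l θ x - k • deltaR (m + l) ∈ QPos (m + l)} n ∧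
      IsGreatest {k : ℤ | x + k • pr m l (0, (l : ℤ)) ∈ θ} n := by
  obtain ⟨⟨a, b⟩, rfl⟩ : ∃ p, pr m l p = x := QuotientAddGroup.mk'_surjective _ x
  obtain ⟨A, hA0, hA⟩ := exists_arm hm hθ hx
  obtain ⟨L, hL0, hL⟩ := exists_leg hl hθ hx
  have hl' : (0 : ℤ) < l := by exact_mod_cast hl
  have hm' : (0 : ℤ) < m := by exact_mod_cast hm
  have hκ' : (0 : ℤ) < ((m + l : ℕ) : ℤ) := by push_cast; lia
  have hiff : ∀ k : ℤ, k * l ≤ A ↔ k * m ≤ L := fun k => by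
    rw [← hA, ← hL, pr_shift m l a (b + k * l) k, add_sub_cancel_right]
  have hmem : ∀ k : ℤ, pr m l (a, b) + k • pr m l (0, (l : ℤ)) ∈ θ ↔ k ≤ A / l := fun k => by
    rw [Int.le_ediv_iff_mul_le hl', ← hA, ← map_zsmul, ← map_add]
    simp
  generalize hn : A / (l : ℤ) = n at hmem
  -- `n` is both `⌊A/ℓ⌋` and `⌊L/m⌋`.
  have hnA : n * l ≤ A := (Int.le_ediv_iff_mul_le hl').mp hn.ge
  have hnA' : A < (n + 1) * l := by
    by_contra! h
    have := (Int.le_ediv_iff_mul_le hl').mpr h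
    lia
  have hnL : n * m ≤ L := (hiff n).mp hnA
  have hnL' : L < (n + 1) * m := by
    by_contra! h
    exact absurd ((hiff _).mpr h) (not_le.mpr hnA')
  have hsum := hk_eq_sum hm hl hA0 hL0 hA hL
  have hcoeff : ∀ v k : ℤ, (hk m l θ (pr m l (a, b)) - k • deltaR (m + l)).1 (v : ZMod (m + l)) =
      ((max ((b - a + A - v) / ((m + l : ℕ) : ℤ) -
        (b - a - L - 1 - v) / ((m + l : ℕ) : ℤ)) 0 - k : ℤ) : ℚ) := fun v k => by
    rw [hsum, Prod.fst_sub, Pi.sub_apply, hk_coeff (by lia)]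
    simp [deltaR]
  refine ⟨n, ⟨⟨?_, fun i => ?_⟩, fun k hk => ?_⟩, (hmem n).mpr le_rfl, fun k hk => (hmem k).mp hk⟩
  · rw [hsum, Prod.snd_sub, hk_snd]
    simp [deltaR]
  · obtain ⟨v, rfl⟩ := ZMod.intCast_surjective i
    rw [hcoeff]
    -- The interval has at least `nκ` members, so each residue class meets it at least `n` times.
    have h : (b - a - L - 1 - v) / ((m + l : ℕ) : ℤ) + n ≤
        (b - a + A - v) / ((m + l : ℕ) : ℤ) := by
      rw [← Int.add_mul_ediv_right _ _ hκ'.ne']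
      refine Int.ediv_le_ediv hκ' ?_
      push_cast
      linarith
    refine ⟨(max ((b - a + A - v) / ((m + l : ℕ) : ℤ) -
        (b - a - L - 1 - v) / ((m + l : ℕ) : ℤ)) 0 - n).toNat, ?_⟩
    rw [← Int.cast_natCast (R := ℚ), Int.toNat_of_nonneg]
    exact sub_nonneg.mpr (le_max_of_le_left (by linarith))
  · -- The first residue beyond the right end of the interval is hit at most `n` times.
    obtain ⟨N, hN⟩ := hk.2 ((b - a + A + 1 : ℤ) : ZMod (m + l))
    rw [hcoeff] at hN
    have h1 : (b - a + A - (b - a + A + 1)) / ((m + l : ℕ) : ℤ) = -1 := by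
      rw [show b - a + A - (b - a + A + 1) = -1 by ring]
      exact Int.ediv_eq_neg_one_of_neg_of_le (by lia) (by lia)
    have h2 : -(n + 1) ≤ (b - a - L - 1 - (b - a + A + 1)) / ((m + l : ℕ) : ℤ) := by
      rw [Int.le_ediv_iff_mul_le hκ']
      push_cast
      linarith
    have h3 : 0 ≤ n := by
      rw [← hn]
      exact Int.ediv_nonneg hA0 hl'.le
    have hN' : max ((b - a + A - (b - a + A + 1)) / ((m + l : ℕ) : ℤ) -
        (b - a - L - 1 - (b - a + A + 1)) / ((m + l : ℕ) : ℤ)) 0 - k = (N : ℤ) := by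
      exact_mod_cast hN
    have h4 : max ((b - a + A - (b - a + A + 1)) / ((m + l : ℕ) : ℤ) -
        (b - a - L - 1 - (b - a + A + 1)) / ((m + l : ℕ) : ℤ)) 0 ≤ n :=
      max_le (by lia) h3
    lia

end CylPaper
end
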